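/- Let n ≥ 1, let p ∈ (0,1), let a ∈ (0, p] be such that a·n is a natural number, and let X₁, …, X_n be i.i.d. {0,1}-valued random variables each equal to 1 with probability p. Then P(X₁ + ⋯ + X_n ≤ a·n) ≤ 2^{−n·D₂(a‖p)}. -/

import Mathlib

/-!
The bound is a change of measure. Write `w` for the Hamming weight of `y`, `u = p / a ≥ 1` and
`v = (1 - p) / (1 - a) ≤ 1`. The density of the Bernoulli(`p`) product law with respect to the
Bernoulli(`a`) product law at `y` is `u ^ w * v ^ (n - w)`, which increases with `w`. On the event
`w ≤ k = a * n` it is therefore at most `u ^ k * v ^ (n - k) = 2 ^ (-n * klBin a p)`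
(`two_rpow_neg_mul_klBin`). Summing over the event and bounding its Bernoulli(`a`) probability
by `1` (`sum_prod_bernoulli`) gives the result.
-/

open Finset
open scoped BigOperators Classical

noncomputable section

/-- `ldgmBeta w δ = (1 - (1-2w)^δ)/2`: the Bernoulli parameter induced by an
input of relative weight `w` in the degree-`δ` LDGM ensemble. -/
def ldgmBeta (w : ℝ) (δ : ℕ) : ℝ := (1 - (1 - 2 * w) ^ δ) / 2

/-- `ldgmU D δ = (1 - (1-2D)^(1/δ))/2`. -/
def ldgmU (D : ℝ) (δ : ℕ) : ℝ := (1 - (1 - 2 * D) ^ ((1 : ℝ) / δ)) / 2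

/-- Binary entropy function (in bits). -/
def binEnt (x : ℝ) : ℝ := -(x * Real.logb 2 x) - (1 - x) * Real.logb 2 (1 - x)

/-- Binary Kullback–Leibler divergence (in bits). -/
def klBin (a p : ℝ) : ℝ := a * Real.logb 2 (a / p) + (1 - a) * Real.logb 2 ((1 - a) / (1 - p))

/-- Probability of the event `E` under the uniform distribution on the finite type `Ω`. -/
def unifP (Ω : Type*) [Fintype Ω] (E : Ω → Prop) : ℝ :=
  ((Finset.univ.filter E).card : ℝ) / (Fintype.card Ω : ℝ)

/-- Conditional probability of `E` given `F` under the uniform distribution on `Ω`. -/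
def unifCondP (Ω : Type*) [Fintype Ω] (E F : Ω → Prop) : ℝ :=
  unifP Ω (fun ω => E ω ∧ F ω) / unifP Ω F

/-- Expectation of `f` under the uniform distribution on the finite type `Ω`. -/
def unifE (Ω : Type*) [Fintype Ω] (f : Ω → ℝ) : ℝ :=
  (∑ ω : Ω, f ω) / (Fintype.card Ω : ℝ)

/-- The encoding map of the degree-`δ` LDGM ensemble with `m` inputs and blocklength `n`:
given the random index choices `I`, the `j`-th codeword bit of `z` is
`z (I j 1) + ⋯ + z (I j δ)` (mod 2). -/
def ldgmEnc {m n δ : ℕ} (I : Fin n → Fin δ → Fin m) (z : Fin m → ZMod 2) :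
    Fin n → ZMod 2 := fun j => ∑ i : Fin δ, z (I j i)

/-- Probability of the event `E` when the coordinates `X₁, …, X_n` are i.i.d.
`{0,1}`-valued with `P(X_j = 1) = p`. -/
def bernP {n : ℕ} (p : ℝ) (E : (Fin n → ZMod 2) → Prop) : ℝ :=
  ∑ y : Fin n → ZMod 2, if E y then ∏ j, (if y j = 1 then p else 1 - p) else 0

/-- The Bernoulli(`p`) product weight of a vector depends only on its Hamming weight. -/
lemma prod_bernoulli_eq {n : ℕ} (p : ℝ) (y : Fin n → ZMod 2) :
    ∏ j, (if y j = 1 then p else 1 - p) =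
      p ^ hammingNorm y * (1 - p) ^ (n - hammingNorm y) := by
  have h2 : ∀ x : ZMod 2, x = 1 ↔ x ≠ 0 := by decide
  have hw : #{j | y j = 1} = hammingNorm y := by
    unfold hammingNorm
    congr 1
    ext j
    simp [h2]
  have hc := Finset.card_filter_add_card_filter_not (s := (univ : Finset (Fin n)))
    (fun j => y j = 1)
  rw [Finset.card_univ, Fintype.card_fin, hw] at hc
  rw [Finset.prod_ite, Finset.prod_const, Finset.prod_const, hw]
  congr 2
  omega

lemma sum_prod_bernoulli (n : ℕ) (a : ℝ) :
    ∑ y : Fin n → ZMod 2, ∏ j, (if y j = 1 then a else 1 - a) = 1 := by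
  rw [← Fintype.prod_sum (fun (_ : Fin n) (x : ZMod 2) => if x = 1 then a else 1 - a)]
  refine Finset.prod_eq_one fun j _ => ?_
  have : (univ : Finset (ZMod 2)) = {0, 1} := by decide
  rw [this, Finset.sum_pair (by decide)]
  simp

lemma two_rpow_neg_mul_klBin {n k : ℕ} {a p : ℝ} (ha : 0 < a) (ha1 : a < 1) (hp : 0 < p)
    (hp1 : p < 1) (hkn : k ≤ n) (hk : (k : ℝ) = a * n) :
    (2 : ℝ) ^ (-(n : ℝ) * klBin a p) = (p / a) ^ k * ((1 - p) / (1 - a)) ^ (n - k) := by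
  have hu : 0 < p / a := by positivity
  have hv : 0 < (1 - p) / (1 - a) := div_pos (by linarith) (by linarith)
  have hu' : Real.logb 2 (a / p) = -Real.logb 2 (p / a) := by
    rw [← Real.logb_inv, inv_div]
  have hv' : Real.logb 2 ((1 - a) / (1 - p)) = -Real.logb 2 ((1 - p) / (1 - a)) := by
    rw [← Real.logb_inv, inv_div]
  have he : -(n : ℝ) * klBin a p = Real.logb 2 (p / a) * (k : ℝ) +
      Real.logb 2 ((1 - p) / (1 - a)) * ((n - k : ℕ) : ℝ) := by
    rw [klBin, hu', hv', Nat.cast_sub hkn, hk]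
    ring
  rw [he, Real.rpow_add two_pos, Real.rpow_mul two_pos.le, Real.rpow_mul two_pos.le,
    Real.rpow_logb two_pos (by norm_num) hu, Real.rpow_logb two_pos (by norm_num) hv,
    Real.rpow_natCast, Real.rpow_natCast]

/-- Sanov/Chernoff bound: if `X₁, …, X_n` are i.i.d. Bernoulli(`p`) and
`a ∈ (0,p]` with `a·n ∈ ℕ`, then `P(X₁ + ⋯ + X_n ≤ a·n) ≤ 2^{-n·D₂(a‖p)}`.  The number
of ones `X₁ + ⋯ + X_n` is the Hamming weight of the vector `(X₁, …, X_n)`. -/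
theorem bernoulli_lower_tail_bound (n : ℕ) (hn : 1 ≤ n) (p : ℝ)
    (hp : p ∈ Set.Ioo (0 : ℝ) 1) (a : ℝ) (ha : 0 < a) (hap : a ≤ p)
    (han : ∃ k : ℕ, (k : ℝ) = a * n) :
    bernP p (fun y : Fin n → ZMod 2 => (hammingNorm y : ℝ) ≤ a * n) ≤
      (2 : ℝ) ^ (-(n : ℝ) * klBin a p) := by
  obtain ⟨k, hk⟩ := han
  obtain ⟨hp0, hp1⟩ := hp
  have ha1 : a < 1 := hap.trans_lt hp1
  have ha1' : 0 < 1 - a := sub_pos.2 ha1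
  have hp1' : 0 < 1 - p := sub_pos.2 hp1
  have hkn : k ≤ n := by
    have : (k : ℝ) ≤ n := by
      rw [hk]
      exact mul_le_of_le_one_left n.cast_nonneg ha1.le
    exact_mod_cast this
  have hu : 1 ≤ p / a := (one_le_div ha).2 hap
  have hv0 : 0 ≤ (1 - p) / (1 - a) := (div_pos hp1' ha1').le
  have hv1 : (1 - p) / (1 - a) ≤ 1 := (div_le_one ha1').2 (by linarith)
  rw [two_rpow_neg_mul_klBin ha ha1 hp0 hp1 hkn hk,
    ← mul_one ((p / a) ^ k * ((1 - p) / (1 - a)) ^ (n - k))]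
  refine le_of_le_of_eq ?_ (congrArg _ (sum_prod_bernoulli n a))
  rw [Finset.mul_sum, bernP]
  refine Finset.sum_le_sum fun y _ => ?_
  rw [prod_bernoulli_eq, prod_bernoulli_eq]
  split_ifs with hy
  · have hwk : hammingNorm y ≤ k := by
      rw [← hk] at hy
      exact_mod_cast hy
    have hsplit : p ^ hammingNorm y * (1 - p) ^ (n - hammingNorm y) =
        ((p / a) ^ hammingNorm y * ((1 - p) / (1 - a)) ^ (n - hammingNorm y)) *
          (a ^ hammingNorm y * (1 - a) ^ (n - hammingNorm y)) := by
      rw [mul_mul_mul_comm, ← mul_pow, ← mul_pow, div_mul_cancel₀ _ ha.ne',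
        div_mul_cancel₀ _ ha1'.ne']
    rw [hsplit]
    refine mul_le_mul_of_nonneg_right ?_ (by positivity)
    exact mul_le_mul (pow_le_pow_right₀ hu hwk)
      (pow_le_pow_of_le_one hv0 hv1 (Nat.sub_le_sub_left hwk n))
      (pow_nonneg hv0 _) (by positivity)
  · positivity
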